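/- Let ψ : ℝ³ → ℝ be measurable, 2π-periodic in each variable, and integrable on [0,2π]³. Then Ψ̃(t,ξ) := ∫_{[0,2π]³} Φ̃(t, ξ−z)·ψ(z) dz is infinitely differentiable on (0,∞) × ℝ³, is 2π-periodic in each space variable, solves the heat equation ∂ₜΨ̃ = ΔΨ̃ pointwise on (0,∞) × ℝ³, and attains the initial data in L¹: lim_{t→0⁺} ∫_{[0,2π]³} |Ψ̃(t,ξ) − ψ(ξ)| dξ = 0. -/

import Mathlib

open MeasureTheory Real Filter

/-- The one-dimensional periodic heat kernel
`Φ(t,x) = 1/(2π) + (1/π)·∑_{n=1}^∞ exp(−n²t)·cos(nx)`. -/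
noncomputable def Φ (t x : ℝ) : ℝ :=
  1 / (2 * π) + (1 / π) * ∑' n : ℕ, Real.exp (-((n : ℝ) + 1) ^ 2 * t) * Real.cos (((n : ℝ) + 1) * x)

/-- The three-dimensional periodic heat kernel `Φ̃(t,x) = Φ(t,x₁)·Φ(t,x₂)·Φ(t,x₃)`. -/
noncomputable def Φ₃ (t x₁ x₂ x₃ : ℝ) : ℝ := Φ t x₁ * Φ t x₂ * Φ t x₃

/-- `Ψ̃(t,ξ) = ∫_{[0,2π]³} Φ̃(t,ξ−z)·ψ(z) dz`. -/
noncomputable def Ψ₃ (ψ : ℝ × ℝ × ℝ → ℝ) (t ξ₁ ξ₂ ξ₃ : ℝ) : ℝ :=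
  ∫ z₁ in (0 : ℝ)..(2 * π), ∫ z₂ in (0 : ℝ)..(2 * π), ∫ z₃ in (0 : ℝ)..(2 * π),
    Φ₃ t (ξ₁ - z₁) (ξ₂ - z₂) (ξ₃ - z₃) * ψ (z₁, z₂, z₃)


/-- abstract exponential series -/
noncomputable def expS {ι E V : Type} [NormedAddCommGroup E] [NormedSpace ℝ E]
    [NormedAddCommGroup V] [NormedSpace ℂ V] (l : ι → E →L[ℝ] ℂ) (a : ι → V) (p : E) : V :=
  ∑' k, Complex.exp (l k p) • a k

/-- local summability of all moments -/
def GoodS {ι E V : Type} [NormedAddCommGroup E] [NormedSpace ℝ E]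
    [NormedAddCommGroup V] (l : ι → E →L[ℝ] ℂ) (s : Set E) (a : ι → V) : Prop :=
  ∀ p ∈ s, ∃ U : Set E, IsOpen U ∧ IsPreconnected U ∧ p ∈ U ∧ ∀ m : ℕ, ∃ u : ι → ℝ, Summable u ∧
    ∀ k, ∀ q ∈ U, ‖a k‖ * ‖l k‖ ^ m * Real.exp ((l k q).re) ≤ u k

section
variable {ι E : Type} [NormedAddCommGroup E] [NormedSpace ℝ E]
    (l : ι → E →L[ℝ] ℂ) {s : Set E}

lemma norm_smulRight_le' {V : Type} [NormedAddCommGroup V] [NormedSpace ℝ V] [NormedSpace ℂ V]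
    [IsScalarTower ℝ ℂ V] (f : E →L[ℝ] ℂ) (v : V) : ‖(f.smulRight v : E →L[ℝ] V)‖ ≤ ‖f‖ * ‖v‖ := by
  refine ContinuousLinearMap.opNorm_le_bound _ (by positivity) fun x => ?_
  rw [ContinuousLinearMap.smulRight_apply, norm_smul]
  calc _ ≤ (‖f‖ * ‖x‖) * ‖v‖ := by
        gcongr
        exact f.le_opNorm x
    _ = _ := by ring

lemma GoodS.D {V : Type} [NormedAddCommGroup V] [NormedSpace ℝ V] [NormedSpace ℂ V]
    [IsScalarTower ℝ ℂ V] {a : ι → V} (h : GoodS l s a) :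
    GoodS l s (fun k => (l k).smulRight (a k) : ι → E →L[ℝ] V) := by
  intro p hp
  obtain ⟨U, h1, h2, h3, h4⟩ := h p hp
  refine ⟨U, h1, h2, h3, fun m => ?_⟩
  obtain ⟨u, hu, hb⟩ := h4 (m + 1)
  refine ⟨u, hu, fun k q hq => le_trans ?_ (hb k q hq)⟩
  calc _ ≤ (‖l k‖ * ‖a k‖) * ‖l k‖ ^ m * Real.exp ((l k q).re) := by
        gcongr
        exact norm_smulRight_le' _ _
    _ = _ := by ring

lemma GoodS.summable {V : Type} [NormedAddCommGroup V] [NormedSpace ℂ V] [CompleteSpace V]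
    {a : ι → V} (h : GoodS l s a) {p : E} (hp : p ∈ s) :
    Summable (fun k => Complex.exp (l k p) • a k) := by
  obtain ⟨U, h1, h2, h3, h4⟩ := h p hp
  obtain ⟨u, hu, hb⟩ := h4 0
  refine Summable.of_norm_bounded hu (fun k => le_trans (le_of_eq ?_) (hb k p h3))
  rw [norm_smul, Complex.norm_exp]
  ring

lemma GoodS.hasFDerivAt {V : Type} [NormedAddCommGroup V] [NormedSpace ℝ V] [NormedSpace ℂ V]
    [IsScalarTower ℝ ℂ V] [CompleteSpace V] {a : ι → V} (h : GoodS l s a) {p : E} (hp : p ∈ s) :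
    HasFDerivAt (expS l a) (expS l (fun k => (l k).smulRight (a k) : ι → E →L[ℝ] V) p) p := by
  have hsum := h.summable l hp
  obtain ⟨U, h1, h2, h3, h4⟩ := h p hp
  obtain ⟨u, hu, hb⟩ := h4 1
  refine hasFDerivAt_tsum_of_isPreconnected (f := fun k q => Complex.exp (l k q) • a k)
    (f' := fun k q => Complex.exp (l k q) • (l k).smulRight (a k)) hu h1 h2 ?_ ?_ h3 hsum h3
  · intro k q hq
    have := ((l k).hasFDerivAt (x := q)).cexp.smul_const (a k)
    convert this using 1
    ext v
    simp [smul_smul]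
  · intro k q hq
    refine le_trans ?_ (hb k q hq)
    rw [norm_smul, Complex.norm_exp]
    calc _ ≤ Real.exp ((l k q).re) * (‖l k‖ * ‖a k‖) := by
          gcongr
          exact norm_smulRight_le' _ _
      _ = _ := by ring

lemma GoodS.contDiffOn_nat (hs : IsOpen s) (n : ℕ) : ∀ {V : Type} [NormedAddCommGroup V]
    [NormedSpace ℝ V] [NormedSpace ℂ V]
    [IsScalarTower ℝ ℂ V] [CompleteSpace V] {a : ι → V} (_ : GoodS l s a),
    ContDiffOn ℝ n (expS l a) s := by
  induction n with
  | zero =>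
    intro V _ _ _ _ _ a h
    exact contDiffOn_zero.2 fun p hp => (h.hasFDerivAt l hp).continuousAt.continuousWithinAt
  | succ n ih =>
    intro V _ _ _ _ _ a h
    push_cast
    rw [contDiffOn_succ_iff_fderiv_of_isOpen hs]
    refine ⟨fun p hp => (h.hasFDerivAt l hp).differentiableAt.differentiableWithinAt, by simp, ?_⟩
    exact (ih h.D).congr fun p hp => (h.hasFDerivAt l hp).fderiv

lemma GoodS.hasDerivAt {a : ι → ℂ} (h : GoodS l s a) {c : ℝ → E} {e : E} {y : ℝ}
    (hc : HasDerivAt c e y) (hp : c y ∈ s) :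
    HasDerivAt (fun y => expS l a (c y)) (expS l (fun k => l k e * a k) (c y)) y := by
  have := (h.hasFDerivAt l hp).comp_hasDerivAt y hc
  refine this.congr_deriv ?_
  have h2 := (h.D).summable l hp
  have := ((ContinuousLinearMap.apply ℝ ℂ e)).map_tsum h2
  simp only [ContinuousLinearMap.apply_apply] at this
  unfold expS
  rw [this]
  simp

lemma GoodS.mul {a : ι → ℂ} (h : GoodS l s a) (e : E) : GoodS l s (fun k => l k e * a k) := by
  intro p hp
  obtain ⟨U, h1, h2, h3, h4⟩ := h p hp
  refine ⟨U, h1, h2, h3, fun m => ?_⟩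
  obtain ⟨u, hu, hb⟩ := h4 (m + 1)
  refine ⟨fun k => ‖e‖ * u k, hu.mul_left _, fun k q hq => ?_⟩
  have := hb k q hq
  calc _ ≤ (‖l k‖ * ‖e‖ * ‖a k‖) * ‖l k‖ ^ m * Real.exp ((l k q).re) := by
        rw [norm_mul]
        gcongr
        exact (l k).le_opNorm e
    _ = ‖e‖ * (‖a k‖ * ‖l k‖ ^ (m+1) * Real.exp ((l k q).re)) := by ring
    _ ≤ _ := mul_le_mul_of_nonneg_left this (norm_nonneg _)
end

lemma sum1 {δ : ℝ} (hδ : 0 < δ) (m : ℕ) :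
    Summable (fun n : ℤ => (1 + (n : ℝ) ^ 2) ^ m * Real.exp (-((n : ℝ) ^ 2 * δ))) := by
  have h (j : ℕ) : Summable (fun n : ℤ => ((n : ℝ) ^ 2) ^ j * Real.exp (-((n : ℝ) ^ 2 * δ))) := by
    have := summable_pow_mul_jacobiTheta₂_term_bound 0 (T := δ / π) (by positivity) (2 * j)
    convert this using 2 with n
    push_cast
    rw [pow_mul, sq_abs]
    congr 2
    field_simp
    ring
  simp_rw [add_comm (1 : ℝ), add_pow, one_pow, mul_one, Finset.sum_mul]
  refine summable_sum fun j _ => ?_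
  simpa [mul_assoc, mul_comm, mul_left_comm] using (h j).mul_left ((m.choose j : ℝ))

lemma Φ_eq (t x : ℝ) (ht : 0 < t) :
    Φ t x = HurwitzZeta.cosKernel ((x / (2 * π) : ℝ) : UnitAddCircle) (t / π) / (2 * π) := by
  have h := (HurwitzZeta.hasSum_nat_cosKernel₀ (x / (2 * π)) (t := t / π) (by positivity)).tsum_eq
  have h2 : HurwitzZeta.cosKernel ((x / (2 * π) : ℝ) : UnitAddCircle) (t / π) = 1 +
      2 * ∑' n : ℕ, Real.exp (-((n : ℝ) + 1) ^ 2 * t) * Real.cos (((n : ℝ) + 1) * x) := by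
    rw [← tsum_mul_left, eq_comm, ← eq_sub_iff_add_eq', ← h]
    refine tsum_congr fun n => ?_
    rw [show 2 * π * (x / (2 * π)) * ((n : ℝ) + 1) = ((n : ℝ) + 1) * x by field_simp,
      show -π * ((n : ℝ) + 1) ^ 2 * (t / π) = -((n : ℝ) + 1) ^ 2 * t by field_simp]
    ring
  rw [h2, Φ]
  generalize (∑' n : ℕ, Real.exp (-((n : ℝ) + 1) ^ 2 * t) * Real.cos (((n : ℝ) + 1) * x)) = S
  field_simp

lemma Φ_hasSum (t x : ℝ) (ht : 0 < t) :
    HasSum (fun n : ℤ => Complex.exp (-((n : ℂ) ^ 2 * t) + Complex.I * (n * x)) / (2 * π))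
      (Φ t x : ℂ) := by
  rw [Φ_eq t x ht]
  have h := (HurwitzZeta.hasSum_int_cosKernel (x / (2 * π)) (t := t / π) (by positivity)).div_const
    (2 * π : ℂ)
  push_cast at h ⊢
  refine h.congr_fun fun n => ?_
  rw [← Complex.exp_add]
  congr 2
  have : (π : ℂ) ≠ 0 := by exact_mod_cast Real.pi_ne_zero
  field_simp
  ring

lemma Φ_nonneg (t x : ℝ) (ht : 0 < t) : 0 ≤ Φ t x := by
  rw [Φ_eq t x ht]
  have h1 := HurwitzZeta.evenKernel_functional_equation ((x / (2 * π) : ℝ) : UnitAddCircle) (π / t)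
  have h2 : 0 ≤ HurwitzZeta.evenKernel ((x / (2 * π) : ℝ) : UnitAddCircle) (π / t) :=
    (HurwitzZeta.hasSum_int_evenKernel (x / (2 * π)) (t := π / t) (by positivity)).nonneg
      fun n => (Real.exp_pos _).le
  rw [h1, one_div_div] at h2
  have h3 : 0 < 1 / (π / t) ^ (1 / 2 : ℝ) := by positivity
  have := nonneg_of_mul_nonneg_right h2 h3
  positivity

lemma Φ_neg (t x : ℝ) : Φ t (-x) = Φ t x := by
  simp [Φ]

lemma Φ_per (t x : ℝ) : Φ t (x + 2 * π) = Φ t x := by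
  unfold Φ
  congr! 5 with n
  rw [mul_add, show ((n : ℝ) + 1) * (2 * π) = ((n + 1 : ℕ) : ℝ) * (2 * π) by push_cast; ring,
    Real.cos_add_nat_mul_two_pi]

lemma norm_term (t x : ℝ) (n : ℤ) :
    ‖Complex.exp (-((n : ℂ) ^ 2 * t) + Complex.I * (n * x)) / (2 * π)‖
      = Real.exp (-((n : ℝ) ^ 2 * t)) / (2 * π) := by
  have : (-((n : ℂ) ^ 2 * t) + Complex.I * (n * x)).re = -((n : ℝ) ^ 2 * t) := by
    have h1 : ((n : ℂ) ^ 2 * t) = (((n : ℝ) ^ 2 * t : ℝ) : ℂ) := by push_cast; rfl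
    have h2 : ((n : ℂ) * x) = (((n : ℝ) * x : ℝ) : ℂ) := by push_cast; rfl
    rw [h1, h2, Complex.add_re, Complex.neg_re, Complex.ofReal_re, Complex.re_mul_ofReal]; simp
  rw [norm_div, Complex.norm_exp, this]
  simp [abs_of_pos Real.pi_pos]

lemma sum_norm (t : ℝ) (ht : 0 < t) :
    Summable (fun n : ℤ => Real.exp (-((n : ℝ) ^ 2 * t)) / (2 * π)) := by
  simpa using (sum1 ht 0).div_const (2 * π)

lemma Φ_bound (t x : ℝ) (ht : 0 < t) :
    ‖Φ t x‖ ≤ ∑' n : ℤ, Real.exp (-((n : ℝ) ^ 2 * t)) / (2 * π) := by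
  have := tsum_of_norm_bounded (sum_norm t ht).hasSum (fun n => (norm_term t x n).le)
  rw [(Φ_hasSum t x ht).tsum_eq] at this
  simpa using this

lemma Φ_cont (t : ℝ) (ht : 0 < t) : Continuous (Φ t) := by
  have h : Continuous (fun x => (Φ t x : ℂ)) := by
    simp_rw [fun x => (Φ_hasSum t x ht).tsum_eq.symm]
    refine continuous_tsum (fun n => by fun_prop) (sum_norm t ht) fun n x => (norm_term t x n).le
  have := Complex.continuous_re.comp h
  simpa [Function.comp_def] using this

lemma int_exp (k : ℤ) : ∫ z in (0 : ℝ)..(2 * π), Complex.exp (Complex.I * (k * z))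
    = if k = 0 then 2 * π else 0 := by
  split_ifs with h
  · simp [h]
  · have hk : (Complex.I * k) ≠ 0 := by simp [h]
    have := integral_exp_mul_complex (a := 0) (b := 2 * π) hk
    simp_rw [← mul_assoc]
    rw [this]
    have h2 : Complex.exp (Complex.I * k * ((2 * π : ℝ) : ℂ)) = 1 := by
      rw [← Complex.exp_int_mul_two_pi_mul_I k]
      congr 1
      push_cast
      ring
    rw [h2]
    simp

lemma Φ_eig (t x : ℝ) (ht : 0 < t) (m : ℤ) :
    ∫ z in (0 : ℝ)..(2 * π), (Φ t (x - z) : ℂ) * Complex.exp (Complex.I * (m * z))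
      = Complex.exp (-((m : ℂ) ^ 2 * t) + Complex.I * (m * x)) := by
  have hexp (z : ℝ) : ‖Complex.exp (Complex.I * (m * z))‖ = 1 := by
    have h2 : ((m : ℂ) * z) = (((m : ℝ) * z : ℝ) : ℂ) := by push_cast; rfl
    rw [h2, mul_comm, Complex.norm_exp_ofReal_mul_I]
  have h := intervalIntegral.hasSum_integral_of_dominated_convergence
    (μ := volume) (a := 0) (b := 2 * π)
    (F := fun (n : ℤ) (z : ℝ) => Complex.exp (-((n : ℂ) ^ 2 * t) + Complex.I * (n * ((x - z : ℝ) : ℂ)))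
      / (2 * π) * Complex.exp (Complex.I * (m * z)))
    (f := fun z => (Φ t (x - z) : ℂ) * Complex.exp (Complex.I * (m * z)))
    (fun (n : ℤ) _ => Real.exp (-((n : ℝ) ^ 2 * t)) / (2 * π))
    (fun n => (by fun_prop : Continuous _).aestronglyMeasurable)
    (fun n => Eventually.of_forall fun z _ => by
      rw [norm_mul, hexp, mul_one]; exact (norm_term t _ n).le)
    (Eventually.of_forall fun z _ => sum_norm t ht)
    (by simp)
    (Eventually.of_forall fun z _ => (Φ_hasSum t (x - z) ht).mul_right _)
  rw [← h.tsum_eq]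
  have hterm (n : ℤ) : ∫ z in (0 : ℝ)..(2 * π),
      Complex.exp (-((n : ℂ) ^ 2 * t) + Complex.I * (n * ((x - z : ℝ) : ℂ)))
      / (2 * π) * Complex.exp (Complex.I * (m * z)) =
      if n = m then Complex.exp (-((m : ℂ) ^ 2 * t) + Complex.I * (m * x)) else 0 := by
    have (z : ℝ) : Complex.exp (-((n : ℂ) ^ 2 * t) + Complex.I * (n * ((x - z : ℝ) : ℂ)))
      / (2 * π) * Complex.exp (Complex.I * (m * z)) =
       Complex.exp (-((n : ℂ) ^ 2 * t) + Complex.I * (n * x)) / (2 * π) *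
        Complex.exp (Complex.I * (((m - n : ℤ) : ℂ) * z)) := by
      rw [div_mul_eq_mul_div, div_mul_eq_mul_div, ← Complex.exp_add, ← Complex.exp_add]
      congr 2
      push_cast
      ring
    simp_rw [this]
    rw [intervalIntegral.integral_const_mul, int_exp]
    have hp : (π : ℂ) ≠ 0 := by exact_mod_cast Real.pi_ne_zero
    by_cases hnm : n = m
    · subst hnm
      simp
    · have : m - n ≠ 0 := by omega
      simp [hnm, this]
  simp_rw [hterm]
  exact tsum_ite_eq m _

/-- one-dimensional measure -/
noncomputable def mu1 : Measure ℝ := volume.restrict (Set.Ioc 0 (2 * π))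

/-- three-dimensional measure on the cube -/
noncomputable def mu3 : Measure (ℝ × ℝ × ℝ) := mu1.prod (mu1.prod mu1)

instance : IsFiniteMeasure mu1 := by
  unfold mu1; infer_instance

instance : IsFiniteMeasure mu3 := by
  unfold mu3; infer_instance

lemma mu1_int {V : Type} [NormedAddCommGroup V] [NormedSpace ℝ V] (f : ℝ → V) :
    ∫ z in (0 : ℝ)..(2 * π), f z = ∫ z, f z ∂mu1 :=
  intervalIntegral.integral_of_le (by positivity)

lemma mu3_eq : mu3 = volume.restrict
    (Set.Ioc (0 : ℝ) (2 * π) ×ˢ Set.Ioc (0 : ℝ) (2 * π) ×ˢ Set.Ioc (0 : ℝ) (2 * π)) := by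
  unfold mu3 mu1
  rw [Measure.prod_restrict, Measure.prod_restrict]
  rfl

lemma iter3 {f : ℝ × ℝ × ℝ → ℝ} (hf : Integrable f mu3) :
    ∫ z₁ in (0 : ℝ)..(2 * π), ∫ z₂ in (0 : ℝ)..(2 * π), ∫ z₃ in (0 : ℝ)..(2 * π),
      f (z₁, z₂, z₃) = ∫ z, f z ∂mu3 := by
  simp_rw [mu1_int]
  unfold mu3 at *
  rw [integral_prod _ hf]
  refine integral_congr_ae ?_
  filter_upwards [hf.prod_right_ae] with z hz
  rw [integral_prod _ hz]

/-- complex kernel operator -/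
noncomputable def TT (t : ℝ) (f : ℝ × ℝ × ℝ → ℂ) (ξ : ℝ × ℝ × ℝ) : ℂ :=
  ∫ z, (Φ₃ t (ξ.1 - z.1) (ξ.2.1 - z.2.1) (ξ.2.2 - z.2.2) : ℂ) * f z ∂mu3

lemma Φ₃_cont (t : ℝ) (ht : 0 < t) :
    Continuous (fun x : ℝ × ℝ × ℝ => (Φ₃ t x.1 x.2.1 x.2.2 : ℂ)) := by
  have := Φ_cont t ht
  unfold Φ₃
  fun_prop

lemma Φ₃_bound (t : ℝ) (ht : 0 < t) : ∃ C : ℝ, ∀ x y z, ‖(Φ₃ t x y z : ℂ)‖ ≤ C := by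
  refine ⟨(∑' n : ℤ, Real.exp (-((n : ℝ) ^ 2 * t)) / (2 * π)) ^ 3, fun x y z => ?_⟩
  have h0 : 0 ≤ ∑' n : ℤ, Real.exp (-((n : ℝ) ^ 2 * t)) / (2 * π) :=
    tsum_nonneg fun n => by positivity
  rw [Complex.norm_real, Φ₃, norm_mul, norm_mul, pow_succ, pow_two]
  have := Φ_bound t x ht
  have := Φ_bound t y ht
  have := Φ_bound t z ht
  gcongr

lemma ker_int (t : ℝ) (ht : 0 < t) {f : ℝ × ℝ × ℝ → ℂ} (hf : Integrable f mu3) (ξ : ℝ × ℝ × ℝ) :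
    Integrable (fun z : ℝ × ℝ × ℝ =>
      (Φ₃ t (ξ.1 - z.1) (ξ.2.1 - z.2.1) (ξ.2.2 - z.2.2) : ℂ) * f z) mu3 := by
  obtain ⟨C, hC⟩ := Φ₃_bound t ht
  refine hf.bdd_mul (c := C) ?_ (Eventually.of_forall fun z => hC _ _ _)
  have := (Φ₃_cont t ht).comp (by fun_prop : Continuous fun z : ℝ × ℝ × ℝ => ξ - z)
  exact this.aestronglyMeasurable

lemma Ψ₃_eq {ψ : ℝ × ℝ × ℝ → ℝ} (hψ : Integrable ψ mu3) {t : ℝ} (ht : 0 < t) (ξ : ℝ × ℝ × ℝ) :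
    (Ψ₃ ψ t ξ.1 ξ.2.1 ξ.2.2 : ℂ) = TT t (fun z => (ψ z : ℂ)) ξ := by
  have h := ker_int t ht hψ.ofReal ξ
  have h2 := h.re
  simp only [RCLike.re_to_complex, ← Complex.ofReal_mul, Complex.ofReal_re,
    Complex.coe_algebraMap] at h2
  unfold Ψ₃ TT
  rw [iter3 h2, ← integral_complex_ofReal]
  simp

/-- frequencies -/
noncomputable def lk (k : ℤ × ℤ × ℤ) : (ℝ × ℝ × ℝ × ℝ) →L[ℝ] ℂ :=
  let t := ContinuousLinearMap.fst ℝ ℝ (ℝ × ℝ × ℝ)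
  let r := ContinuousLinearMap.snd ℝ ℝ (ℝ × ℝ × ℝ)
  let x := (ContinuousLinearMap.fst ℝ ℝ (ℝ × ℝ)).comp r
  let r' := (ContinuousLinearMap.snd ℝ ℝ (ℝ × ℝ)).comp r
  let y := (ContinuousLinearMap.fst ℝ ℝ ℝ).comp r'
  let z := (ContinuousLinearMap.snd ℝ ℝ ℝ).comp r'
  t.smulRight (-((k.1 : ℂ) ^ 2 + (k.2.1 : ℂ) ^ 2 + (k.2.2 : ℂ) ^ 2))
   + x.smulRight (Complex.I * k.1) + y.smulRight (Complex.I * k.2.1)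
   + z.smulRight (Complex.I * k.2.2)

lemma lk_apply (k : ℤ × ℤ × ℤ) (p : ℝ × ℝ × ℝ × ℝ) :
    lk k p = -((k.1 : ℂ) ^ 2 + (k.2.1 : ℂ) ^ 2 + (k.2.2 : ℂ) ^ 2) * p.1
      + Complex.I * k.1 * p.2.1 + Complex.I * k.2.1 * p.2.2.1 + Complex.I * k.2.2 * p.2.2.2 := by
  simp [lk]
  ring

lemma lk_re (k : ℤ × ℤ × ℤ) (p : ℝ × ℝ × ℝ × ℝ) :
    (lk k p).re = -((k.1 : ℝ) ^ 2 + (k.2.1 : ℝ) ^ 2 + (k.2.2 : ℝ) ^ 2) * p.1 := by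
  have : lk k p = ((-((k.1 : ℝ) ^ 2 + (k.2.1 : ℝ) ^ 2 + (k.2.2 : ℝ) ^ 2) * p.1 : ℝ) : ℂ)
     + ((k.1 * p.2.1 + k.2.1 * p.2.2.1 + k.2.2 * p.2.2.2 : ℝ) : ℂ) * Complex.I := by
    rw [lk_apply]
    push_cast
    ring
  rw [this, Complex.add_re, Complex.ofReal_re, Complex.re_ofReal_mul]
  simp

lemma int_abs_le_sq (n : ℤ) : |(n : ℝ)| ≤ (n : ℝ) ^ 2 := by
  have : |n| ≤ n ^ 2 := by
    rcases eq_or_ne n 0 with rfl | h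
    · simp
    · have := Int.one_le_abs h
      nlinarith [sq_abs n]
  exact_mod_cast this

lemma lk_norm (k : ℤ × ℤ × ℤ) :
    ‖lk k‖ ≤ 2 * ((1 + (k.1 : ℝ) ^ 2) * ((1 + (k.2.1 : ℝ) ^ 2) * (1 + (k.2.2 : ℝ) ^ 2))) := by
  refine ContinuousLinearMap.opNorm_le_bound _ (by positivity) fun p => ?_
  rw [lk_apply]
  have e1 : ‖p.1‖ ≤ ‖p‖ := norm_fst_le p
  have e2 : ‖p.2.1‖ ≤ ‖p‖ := (norm_fst_le p.2).trans (norm_snd_le p)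
  have e3 : ‖p.2.2.1‖ ≤ ‖p‖ := (norm_fst_le p.2.2).trans ((norm_snd_le p.2).trans (norm_snd_le p))
  have e4 : ‖p.2.2.2‖ ≤ ‖p‖ := (norm_snd_le p.2.2).trans ((norm_snd_le p.2).trans (norm_snd_le p))
  obtain ⟨k1, k2, k3⟩ := k
  have a1 := int_abs_le_sq k1
  have a2 := int_abs_le_sq k2
  have a3 := int_abs_le_sq k3
  dsimp only at *
  have hn : ‖-((k1 : ℂ) ^ 2 + (k2 : ℂ) ^ 2 + (k3 : ℂ) ^ 2)‖
      = (k1 : ℝ) ^ 2 + (k2 : ℝ) ^ 2 + (k3 : ℝ) ^ 2 := by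
    have : ((k1 : ℂ) ^ 2 + (k2 : ℂ) ^ 2 + (k3 : ℂ) ^ 2)
      = (((k1 : ℝ) ^ 2 + (k2 : ℝ) ^ 2 + (k3 : ℝ) ^ 2 : ℝ) : ℂ) := by push_cast; rfl
    rw [norm_neg, this, Complex.norm_real, Real.norm_of_nonneg (by positivity)]
  have hk (n : ℤ) (x : ℝ) : ‖Complex.I * n * x‖ = |(n : ℝ)| * ‖x‖ := by
    simp
  refine (norm_add_le_of_le (norm_add_le_of_le (norm_add_le _ _) le_rfl) le_rfl).trans ?_
  rw [norm_mul, hn, hk, hk, hk, Complex.norm_real]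
  calc _ ≤ ((k1 : ℝ) ^ 2 + (k2 : ℝ) ^ 2 + (k3 : ℝ) ^ 2) * ‖p‖ + (k1 : ℝ) ^ 2 * ‖p‖
        + (k2 : ℝ) ^ 2 * ‖p‖ + (k3 : ℝ) ^ 2 * ‖p‖ := by gcongr
    _ = 2 * ((k1 : ℝ) ^ 2 + (k2 : ℝ) ^ 2 + (k3 : ℝ) ^ 2) * ‖p‖ := by ring
    _ ≤ _ := by
      gcongr
      have b1 := sq_nonneg (k1 : ℝ)
      have b2 := sq_nonneg (k2 : ℝ)
      have b3 := sq_nonneg (k3 : ℝ)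
      nlinarith [mul_nonneg b1 b2, mul_nonneg b1 b3, mul_nonneg b2 b3,
        mul_nonneg b1 (mul_nonneg b2 b3)]

lemma good_lk (c : ℤ × ℤ × ℤ → ℂ) (C : ℝ) (hc : ∀ k, ‖c k‖ ≤ C) :
    GoodS lk (Set.Ioi (0 : ℝ) ×ˢ (Set.univ : Set (ℝ × ℝ × ℝ))) c := by
  intro p hp
  have hC : 0 ≤ C := (norm_nonneg _).trans (hc 0)
  have hp1 : 0 < p.1 := hp.1
  refine ⟨Set.Ioi (p.1 / 2) ×ˢ Set.univ, isOpen_Ioi.prod isOpen_univ,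
    isPreconnected_Ioi.prod isPreconnected_univ, ⟨by simpa using hp1, trivial⟩, fun m => ?_⟩
  have hδ : 0 < p.1 / 2 := by positivity
  set δ := p.1 / 2
  have hs := sum1 hδ m
  have hnn : 0 ≤ (fun n : ℤ => (1 + (n : ℝ) ^ 2) ^ m * Real.exp (-((n : ℝ) ^ 2 * δ))) :=
    fun n => by positivity
  have hs3 := (hs.mul_of_nonneg (hs.mul_of_nonneg hs hnn hnn) hnn
    (fun n => by positivity)).mul_left (C * 2 ^ m)
  refine ⟨_, hs3, fun k q hq => ?_⟩
  have hq1 : δ < q.1 := hq.1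
  rw [lk_re]
  calc _ ≤ C * (2 * ((1 + (k.1 : ℝ) ^ 2) * ((1 + (k.2.1 : ℝ) ^ 2) * (1 + (k.2.2 : ℝ) ^ 2)))) ^ m
        * Real.exp (-((k.1 : ℝ) ^ 2 + (k.2.1 : ℝ) ^ 2 + (k.2.2 : ℝ) ^ 2) * δ) := by
        gcongr ?_ * ?_ ^ m * Real.exp ?_
        · exact hc k
        · exact lk_norm k
        · exact mul_le_mul_of_nonpos_left hq1.le (by
            have : 0 ≤ ((k.1 : ℝ) ^ 2 + (k.2.1 : ℝ) ^ 2 + (k.2.2 : ℝ) ^ 2) := by positivity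
            linarith)
    _ = _ := by
      rw [show (-((k.1 : ℝ) ^ 2 + (k.2.1 : ℝ) ^ 2 + (k.2.2 : ℝ) ^ 2) * δ) =
        (-((k.1 : ℝ) ^ 2 * δ)) + ((-((k.2.1 : ℝ) ^ 2 * δ)) + (-((k.2.2 : ℝ) ^ 2 * δ))) by ring,
        Real.exp_add, Real.exp_add]
      simp only [mul_pow]
      ring

lemma hasSum_pair {ι κ : Type} {f : ι → ℂ} {g : κ → ℂ}  {a b : ℂ} (hf : HasSum f a) (hg : HasSum g b)
     (nf : Summable fun n => ‖f n‖) (ng : Summable fun n => ‖g n‖) :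
    HasSum (fun k : ι × κ => f k.1 * g k.2) (a * b) ∧ Summable (fun k : ι × κ => ‖f k.1 * g k.2‖) := by
  have := summable_mul_of_summable_norm nf ng
  have h2 := hf.mul hg this
  exact ⟨h2, nf.mul_norm ng⟩
lemma hasSum_triple {ι κ τ : Type} {f : ι → ℂ} {g : κ → ℂ} {h : τ → ℂ} {a b c : ℂ} (hf : HasSum f a) (hg : HasSum g b)
    (hh : HasSum h c) (nf : Summable fun n => ‖f n‖) (ng : Summable fun n => ‖g n‖)
    (nh : Summable fun n => ‖h n‖) :
    HasSum (fun k : ι × κ × τ => f k.1 * (g k.2.1 * h k.2.2)) (a * (b * c)) := by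
  obtain ⟨h1, h2⟩ := hasSum_pair hg hh ng nh
  obtain ⟨h3, h4⟩ := hasSum_pair hf h1 nf h2
  exact h3

lemma Φ₃_hasSum (t : ℝ) (ht : 0 < t) (x : ℝ × ℝ × ℝ) :
    HasSum (fun k : ℤ × ℤ × ℤ => Complex.exp (lk k (t, x)) / (2 * π) ^ 3)
      (Φ₃ t x.1 x.2.1 x.2.2 : ℂ) := by
  have hn (x : ℝ) : Summable (fun n : ℤ =>
      ‖Complex.exp (-((n : ℂ) ^ 2 * t) + Complex.I * (n * x)) / (2 * π)‖) := by
    simp_rw [norm_term]; exact sum_norm t ht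
  have h := hasSum_triple (Φ_hasSum t x.1 ht) (Φ_hasSum t x.2.1 ht) (Φ_hasSum t x.2.2 ht)
    (hn _) (hn _) (hn _)
  have e : (Φ₃ t x.1 x.2.1 x.2.2 : ℂ) = (Φ t x.1 : ℂ) * ((Φ t x.2.1 : ℂ) * (Φ t x.2.2 : ℂ)) := by
    unfold Φ₃
    push_cast
    ring
  rw [e]
  convert h using 1
  funext k
  rw [lk_apply, div_mul_div_comm, div_mul_div_comm, ← Complex.exp_add, ← Complex.exp_add]
  congr 1
  · congr 1
    ring
  · ring

/-- Fourier coefficients -/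
noncomputable def coef (f : ℝ × ℝ × ℝ → ℂ) (k : ℤ × ℤ × ℤ) : ℂ :=
  ∫ z, Complex.exp (lk k (0, -z)) / (2 * π) ^ 3 * f z ∂mu3

lemma norm_exp_lk (k : ℤ × ℤ × ℤ) (z : ℝ × ℝ × ℝ) : ‖Complex.exp (lk k (0, z))‖ = 1 := by
  rw [Complex.norm_exp, lk_re]; simp

lemma coef_bound (f : ℝ × ℝ × ℝ → ℂ) :
    ∃ C, ∀ k, ‖coef f k‖ ≤ C := by
  refine ⟨∫ z, ‖1 / (2 * (π : ℂ)) ^ 3‖ * ‖f z‖ ∂mu3, fun k => ?_⟩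
  refine (norm_integral_le_integral_norm _).trans (le_of_eq ?_)
  congr 1
  ext z
  rw [norm_mul, norm_div, norm_div, norm_exp_lk, norm_one]

lemma TT_eq {f : ℝ × ℝ × ℝ → ℂ} (hf : Integrable f mu3) {t : ℝ} (ht : 0 < t) (ξ : ℝ × ℝ × ℝ) :
    TT t f ξ = expS lk (coef f) (t, ξ) := by
  have hnorm (k : ℤ × ℤ × ℤ) (x : ℝ × ℝ × ℝ) : ‖Complex.exp (lk k (t, x)) / (2 * π) ^ 3‖
      = ‖Complex.exp (lk k (t, 0)) / (2 * π) ^ 3‖ := by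
    rw [norm_div, norm_div, Complex.norm_exp, Complex.norm_exp, lk_re, lk_re]
  have hsum := (Φ₃_hasSum t ht 0).summable.norm
  have h := hasSum_integral_of_dominated_convergence (μ := mu3)
    (F := fun (k : ℤ × ℤ × ℤ) z => Complex.exp (lk k (t, ξ - z)) / (2 * π) ^ 3 * f z)
    (f := fun z => (Φ₃ t (ξ.1 - z.1) (ξ.2.1 - z.2.1) (ξ.2.2 - z.2.2) : ℂ) * f z)
    (fun k z => ‖Complex.exp (lk k (t, 0)) / (2 * π) ^ 3‖ * ‖f z‖)
    (fun k => (by fun_prop : Continuous fun z : ℝ × ℝ × ℝ =>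
      Complex.exp (lk k (t, ξ - z)) / (2 * π) ^ 3).aestronglyMeasurable.mul
        hf.aestronglyMeasurable)
    (fun k => Eventually.of_forall fun z => by rw [norm_mul, hnorm])
    (Eventually.of_forall fun z => hsum.mul_right _)
    (by simp_rw [tsum_mul_right]; exact hf.norm.const_mul _)
    (Eventually.of_forall fun z => (Φ₃_hasSum t ht (ξ - z)).mul_right _)
  unfold TT
  rw [← h.tsum_eq]
  unfold expS coef
  refine tsum_congr fun k => ?_
  rw [smul_eq_mul, ← integral_const_mul]
  congr 1
  ext z
  have : ((t, ξ - z) : ℝ × ℝ × ℝ × ℝ) = (t, ξ) + (0, -z) := by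
    simp [sub_eq_add_neg]
  rw [this, map_add, Complex.exp_add]
  ring

lemma Ψ₃_re {ψ : ℝ × ℝ × ℝ → ℝ} (hψ : Integrable ψ mu3) {t : ℝ} (ht : 0 < t) (x y z : ℝ) :
    Ψ₃ ψ t x y z = (expS lk (coef fun z => (ψ z : ℂ)) (t, x, y, z)).re := by
  have h1 := TT_eq (f := fun z => (ψ z : ℂ)) hψ.ofReal ht (x, y, z)
  have h2 := Ψ₃_eq hψ ht (x, y, z)
  rw [← h1, ← h2, Complex.ofReal_re]

lemma good_coef (f : ℝ × ℝ × ℝ → ℂ) :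
    GoodS lk (Set.Ioi (0 : ℝ) ×ˢ (Set.univ : Set (ℝ × ℝ × ℝ))) (coef f) := by
  obtain ⟨C, hC⟩ := coef_bound f
  exact good_lk _ C hC

lemma part_smooth {ψ : ℝ × ℝ × ℝ → ℝ} (hψ : Integrable ψ mu3) :
    ContDiffOn ℝ (⊤ : ℕ∞) (fun p : ℝ × ℝ × ℝ × ℝ => Ψ₃ ψ p.1 p.2.1 p.2.2.1 p.2.2.2)
      (Set.Ioi (0 : ℝ) ×ˢ (Set.univ : Set (ℝ × ℝ × ℝ))) := by
  rw [contDiffOn_infty]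
  intro n
  have h := (good_coef fun z => (ψ z : ℂ)).contDiffOn_nat lk (isOpen_Ioi.prod isOpen_univ) n
  have h2 := (Complex.reCLM.contDiff (n := n)).comp_contDiffOn h
  exact h2.congr fun p hp => Ψ₃_re hψ hp.1 _ _ _

lemma part_per (ψ : ℝ × ℝ × ℝ → ℝ) (t ξ₁ ξ₂ ξ₃ : ℝ) :
      Ψ₃ ψ t (ξ₁ + 2 * π) ξ₂ ξ₃ = Ψ₃ ψ t ξ₁ ξ₂ ξ₃ ∧
      Ψ₃ ψ t ξ₁ (ξ₂ + 2 * π) ξ₃ = Ψ₃ ψ t ξ₁ ξ₂ ξ₃ ∧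
      Ψ₃ ψ t ξ₁ ξ₂ (ξ₃ + 2 * π) = Ψ₃ ψ t ξ₁ ξ₂ ξ₃ := by
  unfold Ψ₃ Φ₃
  simp_rw [add_sub_right_comm, Φ_per]
  simp

lemma deriv_line {c : ℤ × ℤ × ℤ → ℂ}
    (hc : GoodS lk (Set.Ioi (0 : ℝ) ×ˢ (Set.univ : Set (ℝ × ℝ × ℝ))) c)
    (γ : ℝ → ℝ × ℝ × ℝ × ℝ) (e : ℝ × ℝ × ℝ × ℝ) (y : ℝ) (hγ : HasDerivAt γ e y)
    (hy : 0 < (γ y).1) :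
    HasDerivAt (fun y => (expS lk c (γ y)).re) (expS lk (fun k => lk k e * c k) (γ y)).re y := by
  have h := hc.hasDerivAt lk hγ ⟨hy, trivial⟩
  exact Complex.reCLM.hasFDerivAt.comp_hasDerivAt y h

lemma deriv2_line {c : ℤ × ℤ × ℤ → ℂ}
    (hc : GoodS lk (Set.Ioi (0 : ℝ) ×ˢ (Set.univ : Set (ℝ × ℝ × ℝ))) c)
    (γ : ℝ → ℝ × ℝ × ℝ × ℝ) (e : ℝ × ℝ × ℝ × ℝ) (y : ℝ) (hγ : ∀ y, HasDerivAt γ e y)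
    (hy : ∀ y, 0 < (γ y).1) :
    deriv (deriv (fun y => (expS lk c (γ y)).re)) y =
      (expS lk (fun k => lk k e * (lk k e * c k)) (γ y)).re := by
  have h1 : deriv (fun y => (expS lk c (γ y)).re) =
      fun y => (expS lk (fun k => lk k e * c k) (γ y)).re :=
    funext fun y => (deriv_line hc γ e y (hγ y) (hy y)).deriv
  rw [h1]
  exact (deriv_line (hc.mul lk e) γ e y (hγ y) (hy y)).deriv

lemma part_heat {ψ : ℝ × ℝ × ℝ → ℝ} (hψ : Integrable ψ mu3) (t ξ₁ ξ₂ ξ₃ : ℝ) (ht : 0 < t) :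
      deriv (fun s : ℝ => Ψ₃ ψ s ξ₁ ξ₂ ξ₃) t
        = deriv (deriv (fun y : ℝ => Ψ₃ ψ t y ξ₂ ξ₃)) ξ₁
          + deriv (deriv (fun y : ℝ => Ψ₃ ψ t ξ₁ y ξ₃)) ξ₂
          + deriv (deriv (fun y : ℝ => Ψ₃ ψ t ξ₁ ξ₂ y)) ξ₃ := by
  have hc := good_coef fun z => (ψ z : ℂ)
  simp_rw [Ψ₃_re hψ ht]
  have ht' : (fun s : ℝ => Ψ₃ ψ s ξ₁ ξ₂ ξ₃) =ᶠ[nhds t]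
      fun s => (expS lk (coef fun z => (ψ z : ℂ)) (s, ξ₁, ξ₂, ξ₃)).re := by
    filter_upwards [lt_mem_nhds ht] with s hs using Ψ₃_re hψ hs _ _ _
  rw [ht'.deriv_eq]
  set c := coef fun z => (ψ z : ℂ)
  rw [(deriv_line hc (fun s => (s, ξ₁, ξ₂, ξ₃)) (1, 0, 0, 0) t
    ((hasDerivAt_id t).prodMk (hasDerivAt_const t _)) ht).deriv]
  rw [deriv2_line hc (fun y => (t, y, ξ₂, ξ₃)) (0, 1, 0, 0) ξ₁
    (fun y => (hasDerivAt_const y t).prodMk ((hasDerivAt_id y).prodMk (hasDerivAt_const y _)))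
    (fun _ => ht)]
  rw [deriv2_line hc (fun y => (t, ξ₁, y, ξ₃)) (0, 0, 1, 0) ξ₂
    (fun y => (hasDerivAt_const y t).prodMk ((hasDerivAt_const y _).prodMk
      ((hasDerivAt_id y).prodMk (hasDerivAt_const y _))))
    (fun _ => ht)]
  rw [deriv2_line hc (fun y => (t, ξ₁, ξ₂, y)) (0, 0, 0, 1) ξ₃
    (fun y => (hasDerivAt_const y t).prodMk ((hasDerivAt_const y _).prodMk
      ((hasDerivAt_const y _).prodMk (hasDerivAt_id y))))
    (fun _ => ht)]
  have hp : ((t, ξ₁, ξ₂, ξ₃) : ℝ × ℝ × ℝ × ℝ) ∈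
    (Set.Ioi (0 : ℝ) ×ˢ (Set.univ : Set (ℝ × ℝ × ℝ))) := ⟨ht, trivial⟩
  have hs (e : ℝ × ℝ × ℝ × ℝ) := ((hc.mul lk e).mul lk e).summable lk hp
  rw [← Complex.add_re, ← Complex.add_re]
  unfold expS
  rw [← (hs (0, 1, 0, 0)).tsum_add (hs (0, 0, 1, 0)),
    ← ((hs (0, 1, 0, 0)).add (hs (0, 0, 1, 0))).tsum_add (hs (0, 0, 0, 1))]
  congr 1
  refine tsum_congr fun k => ?_
  simp only [lk_apply, smul_eq_mul]
  have := Complex.I_sq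
  simp only [Complex.ofReal_zero, Complex.ofReal_one, mul_zero, mul_one, add_zero, zero_add]
  linear_combination -(Complex.exp (-((k.1 : ℂ) ^ 2 + (k.2.1 : ℂ) ^ 2 + (k.2.2 : ℂ) ^ 2) * t
      + Complex.I * k.1 * ξ₁ + Complex.I * k.2.1 * ξ₂ + Complex.I * k.2.2 * ξ₃)) * c k *
      ((k.1 : ℂ) ^ 2 + (k.2.1 : ℂ) ^ 2 + (k.2.2 : ℂ) ^ 2) * this

/-- Fourier monomials -/
noncomputable def ek (k : ℤ × ℤ × ℤ) (z : ℝ × ℝ × ℝ) : ℂ := Complex.exp (lk k (0, z))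

lemma TT_ek {t : ℝ} (ht : 0 < t) (k : ℤ × ℤ × ℤ) (ξ : ℝ × ℝ × ℝ) :
    TT t (ek k) ξ = Complex.exp (lk k (t, 0)) * ek k ξ := by
  have h1 (x : ℝ) (m : ℤ) : ∫ z, (Φ t (x - z) : ℂ) * Complex.exp (Complex.I * (m * z)) ∂mu1
      = Complex.exp (-((m : ℂ) ^ 2 * t) + Complex.I * (m * x)) := by
    rw [← mu1_int]; exact Φ_eig t x ht m
  have h2 (z : ℝ × ℝ × ℝ) : (Φ₃ t (ξ.1 - z.1) (ξ.2.1 - z.2.1) (ξ.2.2 - z.2.2) : ℂ) * ek k z =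
      ((Φ t (ξ.1 - z.1) : ℂ) * Complex.exp (Complex.I * (k.1 * z.1))) *
      (((Φ t (ξ.2.1 - z.2.1) : ℂ) * Complex.exp (Complex.I * (k.2.1 * z.2.1))) *
      ((Φ t (ξ.2.2 - z.2.2) : ℂ) * Complex.exp (Complex.I * (k.2.2 * z.2.2)))) := by
    unfold ek Φ₃
    rw [lk_apply]
    have : -((k.1 : ℂ) ^ 2 + (k.2.1 : ℂ) ^ 2 + (k.2.2 : ℂ) ^ 2) * ((0 : ℝ) : ℂ)
      + Complex.I * k.1 * z.1 + Complex.I * k.2.1 * z.2.1 + Complex.I * k.2.2 * z.2.2 =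
       (Complex.I * (k.1 * z.1)) + ((Complex.I * (k.2.1 * z.2.1)) + (Complex.I * (k.2.2 * z.2.2))) := by
      push_cast; ring
    rw [this, Complex.exp_add, Complex.exp_add]
    push_cast
    ring
  unfold TT
  simp_rw [h2]
  unfold mu3
  rw [integral_prod_mul (fun z : ℝ => (Φ t (ξ.1 - z) : ℂ) * Complex.exp (Complex.I * (k.1 * z)))
    (fun z : ℝ × ℝ => ((Φ t (ξ.2.1 - z.1) : ℂ) * Complex.exp (Complex.I * (k.2.1 * z.1))) *
      ((Φ t (ξ.2.2 - z.2) : ℂ) * Complex.exp (Complex.I * (k.2.2 * z.2)))),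
    integral_prod_mul
      (fun z : ℝ => (Φ t (ξ.2.1 - z) : ℂ) * Complex.exp (Complex.I * (k.2.1 * z)))
      (fun z : ℝ => (Φ t (ξ.2.2 - z) : ℂ) * Complex.exp (Complex.I * (k.2.2 * z))),
    h1, h1, h1]
  unfold ek
  rw [lk_apply, lk_apply, ← Complex.exp_add, ← Complex.exp_add, ← Complex.exp_add]
  congr 1
  simp
  ring

lemma Φ₃_nonneg (t : ℝ) (ht : 0 < t) (x y z : ℝ) : 0 ≤ Φ₃ t x y z :=
  mul_nonneg (mul_nonneg (Φ_nonneg t x ht) (Φ_nonneg t y ht)) (Φ_nonneg t z ht)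

lemma Φ₃_mass {t : ℝ} (ht : 0 < t) (z : ℝ × ℝ × ℝ) :
    ∫ ξ : ℝ × ℝ × ℝ, Φ₃ t (ξ.1 - z.1) (ξ.2.1 - z.2.1) (ξ.2.2 - z.2.2) ∂mu3 = 1 := by
  have h := TT_ek ht 0 z
  have e0 (z) : ek 0 z = 1 := by simp [ek, lk_apply]
  have e1 : lk 0 (t, 0) = 0 := by simp [lk_apply]
  unfold TT at h
  simp only [e0, e1, mul_one, Complex.exp_zero] at h
  rw [integral_complex_ofReal] at h
  rw [← Complex.ofReal_inj, Complex.ofReal_one, ← h]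
  congr 2
  ext ξ
  unfold Φ₃
  rw [← Φ_neg, ← Φ_neg t (ξ.2.1 - z.2.1), ← Φ_neg t (ξ.2.2 - z.2.2)]
  simp only [neg_sub]

lemma ker_int2 (t : ℝ) (ht : 0 < t) {f : ℝ × ℝ × ℝ → ℂ} (hf : Integrable f mu3) :
    Integrable (fun p : (ℝ × ℝ × ℝ) × (ℝ × ℝ × ℝ) =>
      (Φ₃ t (p.1.1 - p.2.1) (p.1.2.1 - p.2.2.1) (p.1.2.2 - p.2.2.2) : ℂ) * f p.2)
      (mu3.prod mu3) := by
  obtain ⟨C, hC⟩ := Φ₃_bound t ht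
  refine (hf.comp_snd mu3).bdd_mul (c := C) ?_ (Eventually.of_forall fun z => hC _ _ _)
  have := (Φ₃_cont t ht).comp
    (by fun_prop : Continuous fun z : (ℝ × ℝ × ℝ) × (ℝ × ℝ × ℝ) => z.1 - z.2)
  exact this.aestronglyMeasurable

lemma TT_int {t : ℝ} (ht : 0 < t) {f : ℝ × ℝ × ℝ → ℂ} (hf : Integrable f mu3) :
    Integrable (TT t f) mu3 := (ker_int2 t ht hf).integral_prod_left

lemma TT_contr {t : ℝ} (ht : 0 < t) {f : ℝ × ℝ × ℝ → ℂ} (hf : Integrable f mu3) :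
    ∫ ξ, ‖TT t f ξ‖ ∂mu3 ≤ ∫ z, ‖f z‖ ∂mu3 := by
  have h := ker_int2 t ht hf
  calc _ ≤ ∫ ξ, ∫ z, ‖(Φ₃ t (ξ.1 - z.1) (ξ.2.1 - z.2.1) (ξ.2.2 - z.2.2) : ℂ) * f z‖ ∂mu3 ∂mu3 :=
        integral_mono (TT_int ht hf).norm h.norm.integral_prod_left
          fun ξ => norm_integral_le_integral_norm _
    _ = ∫ z, ∫ ξ, ‖(Φ₃ t (ξ.1 - z.1) (ξ.2.1 - z.2.1) (ξ.2.2 - z.2.2) : ℂ) * f z‖ ∂mu3 ∂mu3 :=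
        integral_integral_swap h.norm
    _ = _ := by
      congr 1
      ext z
      simp_rw [norm_mul, Complex.norm_real, Real.norm_of_nonneg (Φ₃_nonneg t ht _ _ _)]
      rw [integral_mul_const, Φ₃_mass ht z, one_mul]

lemma TT_sub {t : ℝ} (ht : 0 < t) {f g : ℝ × ℝ × ℝ → ℂ} (hf : Integrable f mu3)
    (hg : Integrable g mu3) (ξ) : TT t (fun z => f z - g z) ξ = TT t f ξ - TT t g ξ := by
  unfold TT
  simp_rw [mul_sub]
  exact integral_sub (ker_int t ht hf ξ) (ker_int t ht hg ξ)

lemma TT_add {t : ℝ} (ht : 0 < t) {f g : ℝ × ℝ × ℝ → ℂ} (hf : Integrable f mu3)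
    (hg : Integrable g mu3) (ξ) : TT t (fun z => f z + g z) ξ = TT t f ξ + TT t g ξ := by
  unfold TT
  simp_rw [mul_add]
  exact integral_add (ker_int t ht hf ξ) (ker_int t ht hg ξ)

lemma TT_smul (t : ℝ) (c : ℂ) (f : ℝ × ℝ × ℝ → ℂ) (ξ) :
    TT t (fun z => c * f z) ξ = c * TT t f ξ := by
  unfold TT
  simp_rw [mul_left_comm _ c]
  exact integral_const_mul _ _

/-- convergence property -/
def Conv (f : ℝ × ℝ × ℝ → ℂ) : Prop :=
  Tendsto (fun t : ℝ => ∫ ξ, ‖TT t f ξ - f ξ‖ ∂mu3) (nhdsWithin 0 (Set.Ioi 0)) (nhds 0)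

lemma conv_ek (k : ℤ × ℤ × ℤ) : Conv (ek k) := by
  unfold Conv
  have h : Tendsto (fun t : ℝ => ∫ ξ : ℝ × ℝ × ℝ, ‖Complex.exp (lk k (t, 0)) - 1‖ ∂mu3)
      (nhdsWithin 0 (Set.Ioi 0)) (nhds 0) := by
    simp only [integral_const, smul_eq_mul]
    have : Continuous (fun t : ℝ => mu3.real Set.univ * ‖Complex.exp (lk k (t, 0)) - 1‖) := by
      fun_prop
    have := (this.tendsto 0).mono_left (nhdsWithin_le_nhds (s := Set.Ioi 0))
    have e1 : lk k (0, 0) = 0 := map_zero (lk k)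
    simpa [e1] using this
  refine h.congr' ?_
  filter_upwards [self_mem_nhdsWithin] with t ht
  congr 1
  ext ξ
  rw [TT_ek ht, ← sub_one_mul, norm_mul, ek, norm_exp_lk, mul_one]

lemma conv_add {f g : ℝ × ℝ × ℝ → ℂ} (hf : Integrable f mu3)
    (hg : Integrable g mu3) (cf : Conv f) (cg : Conv g) : Conv (fun z => f z + g z) := by
  unfold Conv at *
  have h := cf.add cg
  rw [add_zero] at h
  refine squeeze_zero' (Eventually.of_forall fun t => integral_nonneg fun _ => norm_nonneg _) ?_ h
  filter_upwards [self_mem_nhdsWithin] with t ht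
  have i1 := ((TT_int ht hf).sub hf).norm
  have i2 := ((TT_int ht hg).sub hg).norm
  refine le_trans ?_ (integral_add i1 i2).le
  refine integral_mono ?_ (i1.add i2) fun ξ => ?_
  · exact ((TT_int ht (hf.add hg)).sub (hf.add hg)).norm
  · simp only [TT_add ht hf hg]
    rw [add_sub_add_comm]
    exact norm_add_le _ _

lemma conv_smul {f : ℝ × ℝ × ℝ → ℂ} (c : ℂ) (cf : Conv f) : Conv (fun z => c * f z) := by
  unfold Conv at *
  have h := cf.const_mul ‖c‖
  rw [mul_zero] at h
  refine h.congr fun t => ?_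
  rw [← integral_const_mul]
  congr 1
  ext ξ
  rw [TT_smul, ← mul_sub, norm_mul]

lemma conv_closed {f : ℝ × ℝ × ℝ → ℂ} (hf : Integrable f mu3)
    (h : ∀ ε > 0, ∃ g, Integrable g mu3 ∧ Conv g ∧ ∫ z, ‖f z - g z‖ ∂mu3 ≤ ε) : Conv f := by
  unfold Conv
  rw [Metric.tendsto_nhds]
  intro ε hε
  obtain ⟨g, hg, cg, hfg⟩ := h (ε / 4) (by positivity)
  have cg' := Metric.tendsto_nhds.1 cg (ε / 4) (by positivity)
  filter_upwards [cg', self_mem_nhdsWithin] with t ht1 ht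
  have ht : 0 < t := ht
  rw [Real.dist_0_eq_abs, abs_of_nonneg (integral_nonneg fun _ => norm_nonneg _)] at *
  have hd := hf.sub hg
  have i1 := (TT_int ht hd).norm
  have i2 := ((TT_int ht hg).sub hg).norm
  have i3 := hd.norm
  calc _ ≤ ∫ ξ, (‖TT t (f - g) ξ‖ + ‖(TT t g - g) ξ‖ + ‖(f - g) ξ‖) ∂mu3 := by
        refine integral_mono ((TT_int ht hf).sub hf).norm ((i1.add i2).add i3) fun ξ => ?_
        have e := TT_sub ht hf hg ξ
        have : TT t f ξ - f ξ = TT t (f - g) ξ + (TT t g - g) ξ - (f - g) ξ := by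
          change _ = TT t (fun z => f z - g z) ξ + (TT t g ξ - g ξ) - (f ξ - g ξ)
          rw [e]; ring
        dsimp only
        rw [this]
        exact (norm_sub_le _ _).trans (by gcongr; exact norm_add_le _ _)
    _ = (∫ ξ, ‖TT t (f - g) ξ‖ ∂mu3) + (∫ ξ, ‖(TT t g - g) ξ‖ ∂mu3) + ∫ ξ, ‖(f - g) ξ‖ ∂mu3 := by
        rw [← integral_add i1 i2]
        exact integral_add (i1.add i2) i3
    _ ≤ ε / 4 + ε / 4 + ε / 4 := by
        have := (TT_contr ht hd).trans hfg
        exact add_le_add (add_le_add this ht1.le) hfg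
    _ < ε := by linarith

/-- projection to the torus -/
noncomputable def qq (z : ℝ × ℝ × ℝ) : UnitAddTorus (Fin 3) :=
  ![((z.1 / (2 * π) : ℝ) : UnitAddCircle), ((z.2.1 / (2 * π) : ℝ) : UnitAddCircle),
    ((z.2.2 / (2 * π) : ℝ) : UnitAddCircle)]

/-- section of the projection -/
noncomputable def rr (a : UnitAddTorus (Fin 3)) : ℝ × ℝ × ℝ :=
  (2 * π * (AddCircle.measurableEquivIoc 1 0 (a 0) : ℝ),
   2 * π * (AddCircle.measurableEquivIoc 1 0 (a 1) : ℝ),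
   2 * π * (AddCircle.measurableEquivIoc 1 0 (a 2) : ℝ))

lemma qq_cont : Continuous qq := by
  unfold qq
  refine continuous_pi fun i => ?_
  have h : Continuous (fun x : ℝ => (x : UnitAddCircle)) := AddCircle.continuous_mk' 1
  fin_cases i
  · exact h.comp (by fun_prop)
  · exact h.comp (by fun_prop)
  · exact h.comp (by fun_prop)

lemma rr_meas : Measurable rr := by
  have h (i : Fin 3) : Measurable (fun a : UnitAddTorus (Fin 3) =>
      2 * π * (AddCircle.measurableEquivIoc 1 0 (a i) : ℝ)) :=
    (measurable_subtype_coe.comp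
      ((AddCircle.measurableEquivIoc 1 0).measurable.comp (measurable_pi_apply i))).const_mul _
  exact (h 0).prodMk ((h 1).prodMk (h 2))

lemma rr_qq {z : ℝ × ℝ × ℝ} (hz : z ∈
    (Set.Ioc (0 : ℝ) (2 * π) ×ˢ Set.Ioc (0 : ℝ) (2 * π) ×ˢ Set.Ioc (0 : ℝ) (2 * π))) :
    rr (qq z) = z := by
  have h (x : ℝ) (hx : x ∈ Set.Ioc (0 : ℝ) (2 * π)) :
      2 * π * (AddCircle.measurableEquivIoc 1 0 ((x / (2 * π) : ℝ) : UnitAddCircle) : ℝ) = x := by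
    have hx' : x / (2 * π) ∈ Set.Ioc (0 : ℝ) (0 + 1) := by
      constructor
      · have := hx.1; positivity
      · rw [zero_add, div_le_one (by positivity)]; exact hx.2
    have := AddCircle.equivIoc_coe_of_mem (p := 1) (a := 0) hx'
    change 2 * π * ((AddCircle.equivIoc 1 0 ((x / (2 * π) : ℝ) : UnitAddCircle) : ℝ)) = x
    rw [this]
    field_simp
  obtain ⟨h1, h2, h3⟩ := hz
  unfold rr qq
  simp only [Matrix.cons_val]
  rw [h _ h1, h _ h2, h _ h3]

lemma mFourier_qq (n : Fin 3 → ℤ) (z : ℝ × ℝ × ℝ) :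
    UnitAddTorus.mFourier n (qq z) = ek (n 0, n 1, n 2) z := by
  have hp : (π : ℂ) ≠ 0 := by exact_mod_cast Real.pi_ne_zero
  unfold UnitAddTorus.mFourier qq ek
  rw [lk_apply]
  simp only [ContinuousMap.coe_mk, Fin.prod_univ_three, Matrix.cons_val]
  rw [fourier_coe_apply, fourier_coe_apply, fourier_coe_apply, ← Complex.exp_add,
    ← Complex.exp_add]
  congr 1
  push_cast
  field_simp
  ring

lemma cont_int (p : C(UnitAddTorus (Fin 3), ℂ)) : Integrable (fun z => p (qq z)) mu3 := by
  refine Integrable.of_bound (C := ‖p‖) (p.continuous.comp qq_cont).aestronglyMeasurable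
    (Eventually.of_forall fun z => p.norm_coe_le_norm _)

lemma conv_span (p : C(UnitAddTorus (Fin 3), ℂ))
    (hp : p ∈ Submodule.span ℂ (Set.range (UnitAddTorus.mFourier (d := Fin 3)))) :
    Conv (fun z => p (qq z)) := by
  induction hp using Submodule.span_induction with
  | mem x h =>
    obtain ⟨n, rfl⟩ := h
    simp_rw [mFourier_qq]
    exact conv_ek _
  | zero =>
    simpa using conv_smul 0 (conv_ek 0)
  | add x y _ _ hx hy => exact conv_add (cont_int x) (cont_int y) hx hy
  | smul a x _ hx => exact conv_smul a hx

lemma conv_cont (p : C(UnitAddTorus (Fin 3), ℂ)) : Conv (fun z => p (qq z)) := by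
  refine conv_closed (cont_int p) fun ε hε => ?_
  have hp : p ∈ closure ((Submodule.span ℂ (Set.range (UnitAddTorus.mFourier (d := Fin 3))) :
      Submodule ℂ _) : Set C(UnitAddTorus (Fin 3), ℂ)) := by
    rw [← Submodule.topologicalClosure_coe, UnitAddTorus.span_mFourier_closure_eq_top]
    trivial
  obtain ⟨g, hg, hd⟩ := Metric.mem_closure_iff.1 hp (ε / (mu3.real Set.univ + 1)) (by positivity)
  refine ⟨fun z => g (qq z), cont_int g, conv_span g hg, ?_⟩
  have hd' : ‖p - g‖ ≤ ε / (mu3.real Set.univ + 1) := by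
    rw [← dist_eq_norm]; exact hd.le
  calc _ ≤ ∫ z : ℝ × ℝ × ℝ, ε / (mu3.real Set.univ + 1) ∂mu3 := by
        refine integral_mono ((cont_int p).sub (cont_int g)).norm (integrable_const _) fun z => ?_
        exact ((p - g).norm_coe_le_norm (qq z)).trans hd'
    _ = mu3.real Set.univ * ε / (mu3.real Set.univ + 1) := by
        rw [integral_const, smul_eq_mul, mul_div_assoc]
    _ ≤ ε := by
        rw [div_le_iff₀ (by positivity)]
        nlinarith

lemma conv_all {f : ℝ × ℝ × ℝ → ℂ} (hm : Measurable f) (hf : Integrable f mu3) : Conv f := by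
  refine conv_closed hf fun ε hε => ?_
  have hae : ∀ᵐ z ∂mu3, f (rr (qq z)) = f z := by
    rw [mu3_eq]
    filter_upwards [ae_restrict_mem
      (measurableSet_Ioc.prod (measurableSet_Ioc.prod measurableSet_Ioc))] with z hz
    rw [rr_qq hz]
  have hq : AEMeasurable qq mu3 := qq_cont.measurable.aemeasurable
  have hfm : Measurable (fun a => f (rr a)) := hm.comp rr_meas
  have hI : Integrable (fun a => f (rr a)) (mu3.map qq) := by
    rw [integrable_map_measure hfm.aestronglyMeasurable hq]
    exact hf.congr (hae.mono fun z hz => hz.symm)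
  obtain ⟨g, hg, hgi⟩ := hI.exists_boundedContinuous_integral_sub_le hε
  refine ⟨fun z => g.toContinuousMap (qq z), cont_int _, conv_cont _, ?_⟩
  have hms : AEStronglyMeasurable (fun a => ‖f (rr a) - g a‖) (mu3.map qq) :=
    (hfm.aestronglyMeasurable.sub g.continuous.aestronglyMeasurable).norm
  rw [integral_map hq hms] at hg
  refine le_trans (le_of_eq (integral_congr_ae ?_)) hg
  filter_upwards [hae] with z hz
  rw [hz]
  rfl

lemma part_data {ψ : ℝ × ℝ × ℝ → ℝ} (hm : Measurable ψ) (hψ : Integrable ψ mu3) :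
    Tendsto (fun t : ℝ =>
        ∫ ξ₁ in (0 : ℝ)..(2 * π), ∫ ξ₂ in (0 : ℝ)..(2 * π), ∫ ξ₃ in (0 : ℝ)..(2 * π),
          |Ψ₃ ψ t ξ₁ ξ₂ ξ₃ - ψ (ξ₁, ξ₂, ξ₃)|)
      (nhdsWithin 0 (Set.Ioi 0)) (nhds 0) := by
  have hf : Integrable (fun z => (ψ z : ℂ)) mu3 := hψ.ofReal
  have h : Conv (fun z => (ψ z : ℂ)) :=
    conv_all (Complex.measurable_ofReal.comp hm) hf
  refine h.congr' ?_
  filter_upwards [self_mem_nhdsWithin] with t ht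
  have e (ξ : ℝ × ℝ × ℝ) : ‖TT t (fun z => (ψ z : ℂ)) ξ - (ψ ξ : ℂ)‖
      = |Ψ₃ ψ t ξ.1 ξ.2.1 ξ.2.2 - ψ ξ| := by
    rw [← Ψ₃_eq hψ ht, ← Complex.ofReal_sub, Complex.norm_real, Real.norm_eq_abs]
  have hi : Integrable (fun ξ : ℝ × ℝ × ℝ => |Ψ₃ ψ t ξ.1 ξ.2.1 ξ.2.2 - ψ ξ|) mu3 := by
    simp_rw [← e]
    exact ((TT_int ht hf).sub hf).norm
  simp_rw [e]
  exact (iter3 hi).symm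


/-- If `ψ : ℝ³ → ℝ` is measurable, `2π`-periodic in each variable and integrable on `[0,2π]³`,
then `Ψ̃(t,ξ) := ∫_{[0,2π]³} Φ̃(t,ξ−z)·ψ(z) dz` is smooth on `(0,∞) × ℝ³`, is `2π`-periodic in
each space variable, solves the heat equation pointwise, and attains the initial data in `L¹`. -/
theorem statement_18 (ψ : ℝ × ℝ × ℝ → ℝ) (hmeas : Measurable ψ)
    (hper₁ : ∀ x₁ x₂ x₃ : ℝ, ψ (x₁ + 2 * π, x₂, x₃) = ψ (x₁, x₂, x₃))
    (hper₂ : ∀ x₁ x₂ x₃ : ℝ, ψ (x₁, x₂ + 2 * π, x₃) = ψ (x₁, x₂, x₃))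
    (hper₃ : ∀ x₁ x₂ x₃ : ℝ, ψ (x₁, x₂, x₃ + 2 * π) = ψ (x₁, x₂, x₃))
    (hint : IntegrableOn ψ
      (Set.Icc (0 : ℝ) (2 * π) ×ˢ Set.Icc (0 : ℝ) (2 * π) ×ˢ Set.Icc (0 : ℝ) (2 * π))) :
    ContDiffOn ℝ (⊤ : ℕ∞) (fun p : ℝ × ℝ × ℝ × ℝ => Ψ₃ ψ p.1 p.2.1 p.2.2.1 p.2.2.2)
      (Set.Ioi (0 : ℝ) ×ˢ (Set.univ : Set (ℝ × ℝ × ℝ))) ∧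
    (∀ t ξ₁ ξ₂ ξ₃ : ℝ, 0 < t →
      Ψ₃ ψ t (ξ₁ + 2 * π) ξ₂ ξ₃ = Ψ₃ ψ t ξ₁ ξ₂ ξ₃ ∧
      Ψ₃ ψ t ξ₁ (ξ₂ + 2 * π) ξ₃ = Ψ₃ ψ t ξ₁ ξ₂ ξ₃ ∧
      Ψ₃ ψ t ξ₁ ξ₂ (ξ₃ + 2 * π) = Ψ₃ ψ t ξ₁ ξ₂ ξ₃) ∧
    (∀ t ξ₁ ξ₂ ξ₃ : ℝ, 0 < t →
      deriv (fun s : ℝ => Ψ₃ ψ s ξ₁ ξ₂ ξ₃) t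
        = deriv (deriv (fun y : ℝ => Ψ₃ ψ t y ξ₂ ξ₃)) ξ₁
          + deriv (deriv (fun y : ℝ => Ψ₃ ψ t ξ₁ y ξ₃)) ξ₂
          + deriv (deriv (fun y : ℝ => Ψ₃ ψ t ξ₁ ξ₂ y)) ξ₃) ∧
    Tendsto (fun t : ℝ =>
        ∫ ξ₁ in (0 : ℝ)..(2 * π), ∫ ξ₂ in (0 : ℝ)..(2 * π), ∫ ξ₃ in (0 : ℝ)..(2 * π),
          |Ψ₃ ψ t ξ₁ ξ₂ ξ₃ - ψ (ξ₁, ξ₂, ξ₃)|)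
      (nhdsWithin 0 (Set.Ioi 0)) (nhds 0) := by
  have hψ : Integrable ψ mu3 := by
    rw [mu3_eq]
    exact hint.mono_set (Set.prod_mono Set.Ioc_subset_Icc_self
      (Set.prod_mono Set.Ioc_subset_Icc_self Set.Ioc_subset_Icc_self))
  exact ⟨part_smooth hψ, fun t ξ₁ ξ₂ ξ₃ _ => part_per ψ t ξ₁ ξ₂ ξ₃,
    fun t ξ₁ ξ₂ ξ₃ ht => part_heat hψ t ξ₁ ξ₂ ξ₃ ht, part_data hmeas hψ⟩
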